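/- Let (R, ν) be a normalized BV₀ pair on (−1,1) such that inf_{t∈K} |R(t)| > 0 for every compact subset K ⊆ (−1,1). Then (1/R, ν_{1/R}) is a normalized BV₀ pair on (−1,1), where ν_{1/R} is the signed measure with dν_{1/R}(t) = −(R(t⁻)·R(t⁺))⁻¹ dν(t); explicitly, 1/R(t) = 1/R(0) + ∫_{(0,t]} s·(R(s⁻)R(s⁺))⁻¹ dν(s) for all t ∈ [0,1) and 1/R(t) = 1/R(0) − ∫_{[t,0)} s·(R(s⁻)R(s⁺))⁻¹ dν(s) for all t ∈ (−1,0]. -/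

import Mathlib

open MeasureTheory Set Filter Function Topology

/-- A normalized BV₀ pair on `(-1,1)`: a signed Borel measure, represented by its
mutually singular positive part `νp` and negative part `νm`, that is finite on compact
subsets of `(-1,1)`, gives no mass to `{0}` and lives on `(-1,1)`, together with a
function `R` satisfying the fundamental-theorem-of-calculus relations. -/
structure NormBV0 where
  R : ℝ → ℝ
  νp : Measure ℝ
  νm : Measure ℝ
  sing : νp.MutuallySingular νm
  supp_p : νp (Set.Ioo (-1 : ℝ) 1)ᶜ = 0
  supp_m : νm (Set.Ioo (-1 : ℝ) 1)ᶜ = 0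
  locfin_p : ∀ K : Set ℝ, IsCompact K → K ⊆ Set.Ioo (-1 : ℝ) 1 → νp K ≠ ⊤
  locfin_m : ∀ K : Set ℝ, IsCompact K → K ⊆ Set.Ioo (-1 : ℝ) 1 → νm K ≠ ⊤
  zero_p : νp {0} = 0
  zero_m : νm {0} = 0
  fund_pos : ∀ t ∈ Set.Ico (0 : ℝ) 1,
    R t = R 0 - ((∫ s in Set.Ioc (0 : ℝ) t, s ∂νp) - (∫ s in Set.Ioc (0 : ℝ) t, s ∂νm))
  fund_neg : ∀ t ∈ Set.Ioc (-1 : ℝ) 0,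
    R t = R 0 + ((∫ s in Set.Ico t (0 : ℝ), s ∂νp) - (∫ s in Set.Ico t (0 : ℝ), s ∂νm))

/-- The integral of `f` over `S` with respect to the signed measure `νp - νm`. -/
noncomputable def NormBV0.integ (P : NormBV0) (S : Set ℝ) (f : ℝ → ℝ) : ℝ :=
  (∫ s in S, f s ∂P.νp) - (∫ s in S, f s ∂P.νm)

/-- The transform `T_{R,ν} f`. -/
noncomputable def NormBV0.T (P : NormBV0) (f : ℝ → ℝ) (t : ℝ) : ℝ :=
  if 0 < t then P.R t * f t + t * P.integ (Set.Ioc 0 t) f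
  else P.R t * f t - t * P.integ (Set.Ico t 0) f

/-! The increment of `1/R` over `(x, y]` is exactly `-(R x * R y)⁻¹` times the increment of `R`.
Summed over finer and finer subdivisions of `[0, t]`, the increments of `1/R` telescope, while the
other side is the integral against `dR` of step functions which, at each `s`, converge to
`-(R(s⁻) R(s))⁻¹`, as the left end of the cell containing `s` stays strictly below `s`. They are
uniformly bounded because `|R|` is bounded below on `[0, t]`, so dominated convergence applies. The
relation on `(-1, 0]` follows by the reflection `t ↦ -t`, which exchanges left and right limits. -/

/-- The step function with value `φ (u k, u (k + 1))` on the cell `(u k, u (k + 1)]`, for `k < N`,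
and `0` outside these cells. It turns a Riemann sum over the partition `u` into an integral. -/
noncomputable def cellStep {𝕜 : Type*} [AddCommMonoid 𝕜] (φ : ℝ × ℝ → 𝕜) (u : ℕ → ℝ) (N : ℕ)
    (s : ℝ) : 𝕜 :=
  ∑ k ∈ Finset.range N, (Ioc (u k) (u (k + 1))).indicator (fun _ => φ (u k, u (k + 1))) s

/-- The `k`-th node of the subdivision of `[a, b]` into `n + 1` intervals of equal length. -/
noncomputable def uniformNode (a b : ℝ) (n k : ℕ) : ℝ :=
  a + k * ((b - a) / (n + 1))

section RiemannSums

variable {𝕜 : Type*} [RCLike 𝕜] {μ : Measure ℝ} {g ψ : ℝ → 𝕜} {φ : ℝ × ℝ → 𝕜} {u : ℕ → ℝ}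
  {N k : ℕ} {a b s C : ℝ}

theorem measurable_cellStep : Measurable (cellStep φ u N) :=
  Finset.measurable_fun_sum _ fun _ _ => measurable_const.indicator measurableSet_Ioc

theorem cellStep_of_mem_Ioc (hu : Monotone u) (hk : k < N) (hs : s ∈ Ioc (u k) (u (k + 1))) :
    cellStep φ u N s = φ (u k, u (k + 1)) := by
  rw [cellStep, Finset.sum_eq_single_of_mem k (Finset.mem_range.2 hk), indicator_of_mem hs]
  intro j _ hjk
  exact indicator_of_notMem (disjoint_right.1 (hu.pairwise_disjoint_on_Ioc_succ hjk) hs) _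

theorem exists_mem_Ioc_succ (hu : Monotone u) (hs : s ∈ Ioc (u 0) (u N)) :
    ∃ k < N, s ∈ Ioc (u k) (u (k + 1)) := by
  rw [← hu.biUnion_Ico_Ioc_map_succ] at hs
  obtain ⟨k, hk, hsk⟩ := mem_iUnion₂.1 hs
  exact ⟨k, hk.2, hsk⟩

theorem norm_cellStep_le (hu : Monotone u)
    (hC : ∀ x ∈ Icc (u 0) (u N), ∀ y ∈ Icc (u 0) (u N), ‖φ (x, y)‖ ≤ C)
    (hs : s ∈ Ioc (u 0) (u N)) : ‖cellStep φ u N s‖ ≤ C := by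
  obtain ⟨k, hk, hsk⟩ := exists_mem_Ioc_succ hu hs
  rw [cellStep_of_mem_Ioc hu hk hsk]
  exact hC _ ⟨hu k.zero_le, hu hk.le⟩ _ ⟨hu (k + 1).zero_le, hu hk⟩

theorem integral_cellStep_mul (hu : Monotone u) (hg : IntervalIntegrable g μ (u 0) (u N)) :
    ∫ s in u 0..u N, cellStep φ u N s * g s ∂μ =
      ∑ k ∈ Finset.range N, φ (u k, u (k + 1)) * ∫ s in u k..u (k + 1), g s ∂μ := by
  have hcell : ∀ k < N, EqOn (fun s => φ (u k, u (k + 1)) * g s)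
      (fun s => cellStep φ u N s * g s) (uIoc (u k) (u (k + 1))) := by
    intro k hk s hs
    rw [uIoc_of_le (hu k.le_succ)] at hs
    simp only [cellStep_of_mem_Ioc hu hk hs]
  have hsub : ∀ k < N, uIcc (u k) (u (k + 1)) ⊆ uIcc (u 0) (u N) := by
    intro k hk
    rw [uIcc_of_le (hu k.le_succ), uIcc_of_le (hu N.zero_le)]
    exact Icc_subset_Icc (hu k.zero_le) (hu hk)
  rw [← intervalIntegral.sum_integral_adjacent_intervals fun k hk =>
    ((hg.mono_set (hsub k hk)).const_mul _).congr (hcell k hk)]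
  refine Finset.sum_congr rfl fun k hk => ?_
  rw [← intervalIntegral.integral_const_mul]
  exact (intervalIntegral.integral_congr_ae (ae_of_all μ (hcell k (Finset.mem_range.1 hk)))).symm

theorem monotone_uniformNode (hab : a ≤ b) (n : ℕ) : Monotone (uniformNode a b n) := by
  intro j k hjk
  have := sub_nonneg.2 hab
  unfold uniformNode
  gcongr

@[simp]
theorem uniformNode_zero (a b : ℝ) (n : ℕ) : uniformNode a b n 0 = a := by
  simp [uniformNode]

@[simp]
theorem uniformNode_last (a b : ℝ) (n : ℕ) : uniformNode a b n (n + 1) = b := by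
  unfold uniformNode
  push_cast
  field_simp
  ring

theorem uniformNode_succ (a b : ℝ) (n k : ℕ) :
    uniformNode a b n (k + 1) = uniformNode a b n k + (b - a) / (n + 1) := by
  unfold uniformNode
  push_cast
  ring

theorem tendsto_cellStep_uniformNode (hs : s ∈ Ioc a b) {c : 𝕜}
    (hφ : Tendsto φ (𝓝[<] s ×ˢ 𝓝[Icc s b] s) (𝓝 c)) :
    Tendsto (fun n => cellStep φ (uniformNode a b n) (n + 1) s) atTop (𝓝 c) := by
  have hmono := monotone_uniformNode (hs.1.le.trans hs.2)
  choose k hk hsk using fun n =>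
    exists_mem_Ioc_succ (N := n + 1) (hmono n) (by simpa using hs)
  have hmesh : Tendsto (fun n : ℕ => (b - a) / (n + 1 : ℝ)) atTop (𝓝 0) := by
    exact_mod_cast (tendsto_const_div_atTop_nhds_zero_nat (b - a)).comp (tendsto_add_atTop_nat 1)
  have hleft : Tendsto (fun n => uniformNode a b n (k n)) atTop (𝓝[<] s) := by
    refine tendsto_nhdsWithin_iff.2 ⟨?_, Eventually.of_forall fun n => (hsk n).1⟩
    refine tendsto_of_tendsto_of_tendsto_of_le_of_le (by simpa using hmesh.const_sub s)
      tendsto_const_nhds (fun n => ?_) (fun n => (hsk n).1.le)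
    exact sub_le_iff_le_add.2 ((hsk n).2.trans_eq (uniformNode_succ a b n (k n)))
  have hright : Tendsto (fun n => uniformNode a b n (k n + 1)) atTop (𝓝[Icc s b] s) := by
    refine tendsto_nhdsWithin_iff.2 ⟨?_, Eventually.of_forall fun n =>
      ⟨(hsk n).2, (hmono n (hk n)).trans_eq (uniformNode_last a b n)⟩⟩
    refine tendsto_of_tendsto_of_tendsto_of_le_of_le tendsto_const_nhds
      (by simpa using hmesh.const_add s) (fun n => (hsk n).2) (fun n => ?_)
    rw [uniformNode_succ]
    gcongr
    exact (hsk n).1.le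
  refine (hφ.comp (hleft.prodMk hright)).congr fun n => ?_
  exact (cellStep_of_mem_Ioc (hmono n) (hk n) (hsk n)).symm

theorem aestronglyMeasurable_of_tendsto_cells
    (hφ : ∀ s ∈ Ioc a b, Tendsto φ (𝓝[<] s ×ˢ 𝓝[Icc s b] s) (𝓝 (ψ s))) :
    AEStronglyMeasurable ψ (μ.restrict (Ioc a b)) := by
  refine aestronglyMeasurable_of_tendsto_ae atTop
    (f := fun n => cellStep φ (uniformNode a b n) (n + 1))
    (fun n => measurable_cellStep.aestronglyMeasurable) ?_
  filter_upwards [ae_restrict_mem measurableSet_Ioc] with s hs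
  exact tendsto_cellStep_uniformNode hs (hφ s hs)

theorem tendsto_sum_mul_integral_cells (hab : a ≤ b) (hg : IntervalIntegrable g μ a b)
    (hφ : ∀ s ∈ Ioc a b, Tendsto φ (𝓝[<] s ×ˢ 𝓝[Icc s b] s) (𝓝 (ψ s)))
    (hC : ∀ x ∈ Icc a b, ∀ y ∈ Icc a b, ‖φ (x, y)‖ ≤ C) :
    Tendsto (fun n : ℕ => ∑ k ∈ Finset.range (n + 1),
        φ (uniformNode a b n k, uniformNode a b n (k + 1)) *
          ∫ s in uniformNode a b n k..uniformNode a b n (k + 1), g s ∂μ)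
      atTop (𝓝 (∫ s in a..b, ψ s * g s ∂μ)) := by
  have hsum : ∀ n : ℕ, ∫ s in a..b, cellStep φ (uniformNode a b n) (n + 1) s * g s ∂μ =
      ∑ k ∈ Finset.range (n + 1), φ (uniformNode a b n k, uniformNode a b n (k + 1)) *
        ∫ s in uniformNode a b n k..uniformNode a b n (k + 1), g s ∂μ := fun n => by
    simpa using integral_cellStep_mul (N := n + 1) (monotone_uniformNode hab n) (by simpa using hg)
  simp only [← hsum]
  refine intervalIntegral.tendsto_integral_filter_of_dominated_convergence (fun s => C * ‖g s‖)
    (Eventually.of_forall fun n => ?_) (Eventually.of_forall fun n => ?_)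
    (hg.norm.const_mul C) ?_
  · exact measurable_cellStep.aestronglyMeasurable.mul hg.def'.aestronglyMeasurable
  · refine Eventually.of_forall fun s hs => ?_
    rw [uIoc_of_le hab] at hs
    rw [norm_mul]
    gcongr
    exact norm_cellStep_le (monotone_uniformNode hab n) (by simpa using hC) (by simpa using hs)
  · refine Eventually.of_forall fun s hs => ?_
    rw [uIoc_of_le hab] at hs
    exact (tendsto_cellStep_uniformNode hs (hφ s hs)).mul_const _

end RiemannSums

section Primitives

variable {𝕜 : Type*} [RCLike 𝕜] {μ : Measure ℝ} {F g : ℝ → 𝕜} {a b s x y ε : ℝ}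

theorem tendsto_intervalIntegral_nhdsLT (hg : IntervalIntegrable g μ a s) (has : a < s) :
    Tendsto (fun x => ∫ u in a..x, g u ∂μ) (𝓝[<] s) (𝓝 (∫ u in Ioo a s, g u ∂μ)) := by
  have hcover : AECover (μ.restrict (Ioo a s)) (𝓝[<] s) fun x => Ioc a x :=
    aecover_Ioo_of_Ioc tendsto_const_nhds (tendsto_id.mono_left nhdsWithin_le_nhds)
  have hint : IntegrableOn g (Ioo a s) μ := hg.1.mono_set Ioo_subset_Ioc_self
  refine (hcover.integral_tendsto_of_countably_generated hint).congr' ?_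
  filter_upwards [Ioo_mem_nhdsLT has] with x hx
  have hsub : Ioc a x ⊆ Ioo a s := Ioc_subset_Ioo_right hx.2
  rw [Measure.restrict_restrict measurableSet_Ioc, inter_eq_left.2 hsub,
    intervalIntegral.integral_of_le hx.1.le]

theorem continuousWithinAt_intervalIntegral_right (hg : IntervalIntegrable g μ a b)
    (hs : s ∈ Icc a b) :
    ContinuousWithinAt (fun x => ∫ u in a..x, g u ∂μ) (Icc s b) s := by
  have hcover : AECover (μ.restrict (Ioc s b)) (𝓝[Icc s b] s) fun x => Ioi x :=
    (aecover_Ioi_of_Ioi (tendsto_id.mono_left nhdsWithin_le_nhds)).mono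
      (Measure.restrict_mono Ioc_subset_Ioi_self le_rfl)
  have hint : IntegrableOn g (Ioc s b) μ := hg.1.mono_set (Ioc_subset_Ioc_left hs.1)
  have htail : ∀ x ∈ Icc s b, ∫ u in a..x, g u ∂μ =
      (∫ u in a..b, g u ∂μ) - ∫ u in Ioi x, g u ∂μ.restrict (Ioc s b) := by
    intro x hx
    rw [Measure.restrict_restrict measurableSet_Ioi, inter_comm, Ioc_inter_Ioi, max_eq_right hx.1,
      ← intervalIntegral.integral_of_le hx.2, eq_sub_iff_add_eq]
    have hxab : x ∈ uIcc a b := Icc_subset_uIcc ⟨hs.1.trans hx.1, hx.2⟩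
    exact intervalIntegral.integral_add_adjacent_intervals
      (hg.mono_set (uIcc_subset_uIcc_left hxab)) (hg.mono_set (uIcc_subset_uIcc_right hxab))
  have hlim := (hcover.integral_tendsto_of_countably_generated hint).const_sub
    (∫ u in a..b, g u ∂μ)
  refine ContinuousWithinAt.congr_of_mem ?_ htail (left_mem_Icc.2 hs.2)
  simpa [ContinuousWithinAt, Measure.restrict_restrict measurableSet_Ioi,
    inter_eq_right.2 Ioc_subset_Ioi_self] using hlim

/-- `F` is a primitive of the measure `g dμ` on `[a, b]`. The increments of `F` are the masses of
the half-open intervals `(x, y]`, so `F` is right-continuous and may jump at the atoms of `μ`. -/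
structure IsPrimitiveOn (F g : ℝ → 𝕜) (μ : Measure ℝ) (a b : ℝ) : Prop where
  intervalIntegrable : IntervalIntegrable g μ a b
  eq_add_integral : ∀ x ∈ Icc a b, F x = F a + ∫ u in a..x, g u ∂μ

namespace IsPrimitiveOn

theorem mono_right (hF : IsPrimitiveOn F g μ a b) (hs : s ∈ Icc a b) :
    IsPrimitiveOn F g μ a s where
  intervalIntegrable :=
    hF.intervalIntegrable.mono_set (uIcc_subset_uIcc_left (Icc_subset_uIcc hs))
  eq_add_integral x hx := hF.eq_add_integral x ⟨hx.1, hx.2.trans hs.2⟩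

theorem integral_eq_sub (hF : IsPrimitiveOn F g μ a b) (hx : x ∈ Icc a b) (hy : y ∈ Icc a b) :
    ∫ u in x..y, g u ∂μ = F y - F x := by
  rw [hF.eq_add_integral x hx, hF.eq_add_integral y hy, add_sub_add_left_eq_sub,
    intervalIntegral.integral_interval_sub_left (hF.mono_right hy).intervalIntegrable
      (hF.mono_right hx).intervalIntegrable]

theorem tendsto_leftLim (hF : IsPrimitiveOn F g μ a b) (hs : s ∈ Ioc a b) :
    Tendsto F (𝓝[<] s) (𝓝 (leftLim F s)) := by
  have hg := (hF.mono_right (Ioc_subset_Icc_self hs)).intervalIntegrable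
  refine tendsto_leftLim_of_tendsto
    ⟨_, ((tendsto_intervalIntegral_nhdsLT hg hs.1).const_add (F a)).congr' ?_⟩
  filter_upwards [Ioo_mem_nhdsLT hs.1] with x hx
  exact (hF.eq_add_integral x ⟨hx.1.le, hx.2.le.trans hs.2⟩).symm

theorem continuousWithinAt_right (hF : IsPrimitiveOn F g μ a b) (hs : s ∈ Icc a b) :
    ContinuousWithinAt F (Icc s b) s :=
  ((continuousWithinAt_intervalIntegral_right hF.intervalIntegrable hs).const_add
    (F a)).congr_of_mem (fun x hx => hF.eq_add_integral x ⟨hs.1.trans hx.1, hx.2⟩)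
    (left_mem_Icc.2 hs.2)

theorem rightLim_eq (hF : IsPrimitiveOn F g μ a b) (hs : s ∈ Ico a b) : rightLim F s = F s :=
  ((continuousWithinAt_Icc_iff_Ici hs.2).1
    (hF.continuousWithinAt_right (Ico_subset_Icc_self hs))).rightLim_eq

theorem le_norm_leftLim (hF : IsPrimitiveOn F g μ a b) (hε : ∀ x ∈ Icc a b, ε ≤ ‖F x‖)
    (hs : s ∈ Ioc a b) : ε ≤ ‖leftLim F s‖ := by
  refine ge_of_tendsto (hF.tendsto_leftLim hs).norm ?_
  filter_upwards [Ioo_mem_nhdsLT hs.1] with x hx using hε x ⟨hx.1.le, hx.2.le.trans hs.2⟩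

theorem tendsto_inv_mul (hF : IsPrimitiveOn F g μ a b) (hε₀ : 0 < ε)
    (hε : ∀ x ∈ Icc a b, ε ≤ ‖F x‖) (hs : s ∈ Ioc a b) :
    Tendsto (fun p : ℝ × ℝ => (F p.1 * F p.2)⁻¹) (𝓝[<] s ×ˢ 𝓝[Icc s b] s)
      (𝓝 (leftLim F s * F s)⁻¹) := by
  have hs' := Ioc_subset_Icc_self hs
  have hleft : leftLim F s ≠ 0 := norm_pos_iff.1 (hε₀.trans_le (hF.le_norm_leftLim hε hs))
  have hright : F s ≠ 0 := norm_pos_iff.1 (hε₀.trans_le (hε s hs'))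
  exact (((hF.tendsto_leftLim hs).comp tendsto_fst).mul
    ((hF.continuousWithinAt_right hs').tendsto.comp tendsto_snd)).inv₀ (mul_ne_zero hleft hright)

theorem integrableOn_inv_leftLim_mul (hF : IsPrimitiveOn F g μ a b) (hμ : μ (Ioc a b) ≠ ⊤)
    (hε₀ : 0 < ε) (hε : ∀ x ∈ Icc a b, ε ≤ ‖F x‖) :
    IntegrableOn (fun s => (leftLim F s * F s)⁻¹) (Ioc a b) μ := by
  refine .of_bound hμ.lt_top
    (aestronglyMeasurable_of_tendsto_cells fun s => hF.tendsto_inv_mul hε₀ hε) (ε * ε)⁻¹ ?_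
  filter_upwards [ae_restrict_mem measurableSet_Ioc] with s hs
  rw [norm_inv, norm_mul]
  gcongr
  · exact hF.le_norm_leftLim hε hs
  · exact hε s (Ioc_subset_Icc_self hs)

theorem inv_sub_inv_eq_neg_integral (hF : IsPrimitiveOn F g μ a b) (hab : a ≤ b) (hε₀ : 0 < ε)
    (hε : ∀ x ∈ Icc a b, ε ≤ ‖F x‖) :
    (F b)⁻¹ - (F a)⁻¹ = -∫ s in a..b, (leftLim F s * F s)⁻¹ * g s ∂μ := by
  have hne : ∀ x ∈ Icc a b, F x ≠ 0 := fun x hx => norm_pos_iff.1 (hε₀.trans_le (hε x hx))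
  have hbound : ∀ x ∈ Icc a b, ∀ y ∈ Icc a b, ‖(F x * F y)⁻¹‖ ≤ (ε * ε)⁻¹ := by
    intro x hx y hy
    rw [norm_inv, norm_mul]
    gcongr
    exacts [hε x hx, hε y hy]
  have hlim := tendsto_sum_mul_integral_cells hab hF.intervalIntegrable
    (fun s => hF.tendsto_inv_mul hε₀ hε) hbound
  have hnode : ∀ n, ∀ k ≤ n + 1, uniformNode a b n k ∈ Icc a b := fun n k hk =>
    ⟨by simpa using monotone_uniformNode hab n k.zero_le,
      by simpa using monotone_uniformNode hab n hk⟩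
  have htelescope : ∀ n : ℕ, ∑ k ∈ Finset.range (n + 1),
      (F (uniformNode a b n k) * F (uniformNode a b n (k + 1)))⁻¹ *
        ∫ s in uniformNode a b n k..uniformNode a b n (k + 1), g s ∂μ = (F a)⁻¹ - (F b)⁻¹ := by
    intro n
    have hsum := Finset.sum_range_sub' (fun k => (F (uniformNode a b n k))⁻¹) (n + 1)
    rw [uniformNode_zero, uniformNode_last] at hsum
    rw [← hsum]
    refine Finset.sum_congr rfl fun k hk => ?_
    have hx := hnode n k (Finset.mem_range.1 hk).le
    have hy := hnode n (k + 1) (Finset.mem_range.1 hk)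
    rw [hF.integral_eq_sub hx hy, inv_sub_inv (hne _ hx) (hne _ hy), div_eq_inv_mul]
  simp only [htelescope] at hlim
  rw [← tendsto_nhds_unique tendsto_const_nhds hlim, neg_sub]

end IsPrimitiveOn

end Primitives

theorem setIntegral_measure_neg {E : Type*} [NormedAddCommGroup E] [NormedSpace ℝ E]
    (μ : Measure ℝ) (S : Set ℝ) (f : ℝ → E) :
    ∫ s in S, f s ∂μ.neg = ∫ s in -S, f (-s) ∂μ :=
  (MeasurableEquiv.neg ℝ).measurableEmbedding.setIntegral_map f S

theorem leftLim_comp_neg {β : Type*} [TopologicalSpace β] [T2Space β] (f : ℝ → β) (a : ℝ) :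
    leftLim (fun x => f (-x)) a = rightLim f (-a) := by
  by_cases h : ∃ y, Tendsto f (𝓝[>] (-a)) (𝓝 y)
  · obtain ⟨y, hy⟩ := h
    rw [rightLim_eq_of_tendsto hy]
    exact leftLim_eq_of_tendsto (hy.comp tendsto_neg_nhdsLT)
  · rw [rightLim_eq_of_not_tendsto f h]
    refine leftLim_eq_of_not_tendsto _ fun ⟨y, hy⟩ => h ⟨y, ?_⟩
    simpa [comp_def] using hy.comp tendsto_neg_nhdsGT_neg

theorem rightLim_comp_neg {β : Type*} [TopologicalSpace β] [T2Space β] (f : ℝ → β) (a : ℝ) :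
    rightLim (fun x => f (-x)) a = leftLim f (-a) := by
  simpa using (leftLim_comp_neg (fun x => f (-x)) (-a)).symm

theorem exists_subset_Icc_neg_of_isCompact {K : Set ℝ} {r : ℝ} (hr : 0 < r) (hK : IsCompact K)
    (hKr : K ⊆ Ioo (-r) r) : ∃ c ∈ Ico 0 r, K ⊆ Icc (-c) c := by
  rcases K.eq_empty_or_nonempty with rfl | hne
  · exact ⟨0, ⟨le_rfl, hr⟩, empty_subset _⟩
  obtain ⟨x, hx, hmax⟩ := hK.exists_isMaxOn hne continuous_abs.continuousOn
  exact ⟨|x|, ⟨abs_nonneg x, abs_lt.2 (hKr hx)⟩, fun y hy => abs_le.1 (hmax hy)⟩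

theorem neg_subset_Ioo {S : Set ℝ} {r : ℝ} (hS : S ⊆ Ioo (-r) r) : -S ⊆ Ioo (-r) r := by
  simpa using neg_subset_neg.2 hS

namespace NormBV0

/-- The total variation measure `|ν|`. -/
noncomputable def totalVariation (P : NormBV0) : Measure ℝ :=
  P.νp + P.νm

open Classical in
/-- The sign of `ν`, that is the density of `ν` with respect to `|ν|`, chosen with values `±1`. -/
noncomputable def sign (P : NormBV0) (s : ℝ) : ℝ :=
  if s ∈ P.sing.nullSet then -1 else 1

/-- The density `(R(s⁻) R(s⁺))⁻¹` of `-ν_{1/R}` with respect to `ν`. -/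
noncomputable def invDensity (P : NormBV0) (s : ℝ) : ℝ :=
  (leftLim P.R s * rightLim P.R s)⁻¹

/-- The condition `inf_K |R| > 0` for every compact `K ⊆ (-1, 1)`. -/
def LocallyBoundedBelow (P : NormBV0) : Prop :=
  ∀ K : Set ℝ, IsCompact K → K ⊆ Ioo (-1 : ℝ) 1 → ∃ ε > (0 : ℝ), ∀ t ∈ K, ε ≤ |P.R t|

variable {P : NormBV0} {K S : Set ℝ} {f : ℝ → ℝ} {t : ℝ}

theorem totalVariation_ne_top (hK : IsCompact K) (hKI : K ⊆ Ioo (-1 : ℝ) 1) :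
    P.totalVariation K ≠ ⊤ :=
  ENNReal.add_ne_top.2 ⟨P.locfin_p K hK hKI, P.locfin_m K hK hKI⟩

theorem totalVariation_singleton_zero : P.totalVariation {0} = 0 := by
  simp [totalVariation, P.zero_p, P.zero_m]

theorem sign_ae_eq_one : ∀ᵐ s ∂P.νp, P.sign s = 1 := by
  filter_upwards [measure_eq_zero_iff_ae_notMem.1 P.sing.measure_nullSet] with s hs
  exact if_neg hs

theorem sign_ae_eq_neg_one : ∀ᵐ s ∂P.νm, P.sign s = -1 := by
  filter_upwards [measure_eq_zero_iff_ae_notMem.1 P.sing.measure_compl_nullSet] with s hs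
  exact if_pos (not_not.1 hs)

theorem sign_mul_ae_eq : (fun s => P.sign s * f s) =ᵐ[P.νp.restrict S] f := by
  filter_upwards [ae_restrict_of_ae sign_ae_eq_one] with s hs
  rw [hs, one_mul]

theorem sign_mul_ae_eq_neg : (fun s => P.sign s * f s) =ᵐ[P.νm.restrict S] -f := by
  filter_upwards [ae_restrict_of_ae sign_ae_eq_neg_one] with s hs
  rw [hs, neg_one_mul, Pi.neg_apply]

theorem integrableOn_sign_mul (hf : IntegrableOn f S P.totalVariation) :
    IntegrableOn (fun s => P.sign s * f s) S P.totalVariation := by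
  rw [totalVariation, integrableOn_add_measure] at hf ⊢
  exact ⟨hf.1.congr sign_mul_ae_eq.symm, hf.2.neg.congr sign_mul_ae_eq_neg.symm⟩

theorem integ_neg : P.integ S (fun s => -f s) = -P.integ S f := by
  rw [integ, integral_neg, integral_neg, integ]
  ring

theorem integ_eq_setIntegral (hf : IntegrableOn f S P.totalVariation) :
    P.integ S f = ∫ s in S, P.sign s * f s ∂P.totalVariation := by
  have hsign := integrableOn_sign_mul hf
  rw [totalVariation, integrableOn_add_measure] at hsign
  rw [totalVariation, Measure.restrict_add, integral_add_measure hsign.1 hsign.2,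
    integral_congr_ae sign_mul_ae_eq, integral_congr_ae sign_mul_ae_eq_neg, integral_neg', integ,
    sub_eq_add_neg]

theorem Icc_zero_subset_Ioo (ht : t < 1) : Icc 0 t ⊆ Ioo (-1 : ℝ) 1 :=
  Icc_subset_Ioo neg_one_lt_zero ht

theorem totalVariation_Ioc_ne_top (ht : t < 1) : P.totalVariation (Ioc 0 t) ≠ ⊤ :=
  measure_ne_top_of_subset Ioc_subset_Icc_self
    (totalVariation_ne_top isCompact_Icc (Icc_zero_subset_Ioo ht))

theorem isPrimitiveOn (ht : t ∈ Ico (0 : ℝ) 1) :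
    IsPrimitiveOn P.R (fun s => -(P.sign s * s)) P.totalVariation 0 t := by
  have hid : IntegrableOn (fun s : ℝ => s) (Ioc 0 t) P.totalVariation :=
    continuousOn_id.integrableOn_of_subset_isCompact isCompact_Icc measurableSet_Ioc
      Ioc_subset_Icc_self (totalVariation_Ioc_ne_top ht.2)
  refine ⟨(intervalIntegrable_iff_integrableOn_Ioc_of_le ht.1).2 (integrableOn_sign_mul hid).neg,
    fun x hx => ?_⟩
  rw [P.fund_pos x ⟨hx.1, hx.2.trans_lt ht.2⟩, intervalIntegral.integral_of_le hx.1, integral_neg,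
    ← integ_eq_setIntegral (hid.mono_set (Ioc_subset_Ioc_right hx.2)), sub_eq_add_neg, integ]

theorem invDensity_of_mem_Ioc (ht : t < 1) {s : ℝ} (hs : s ∈ Ioc 0 t) :
    P.invDensity s = (leftLim P.R s * P.R s)⁻¹ := by
  obtain ⟨c, htc, hc⟩ := exists_between ht
  have hsc : s < c := hs.2.trans_lt htc
  rw [invDensity, (isPrimitiveOn ⟨(hs.1.trans hsc).le, hc⟩).rightLim_eq ⟨hs.1.le, hsc⟩]

/-- The image of `(R, ν)` under `t ↦ -t`. It turns statements about `(-1, 0]` into statements about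
`[0, 1)`. -/
noncomputable def reflect (P : NormBV0) : NormBV0 where
  R x := P.R (-x)
  νp := P.νp.neg
  νm := P.νm.neg
  sing := (MeasurableEquiv.neg ℝ).measurableEmbedding.mutuallySingular_map P.sing
  supp_p := by simpa using P.supp_p
  supp_m := by simpa using P.supp_m
  locfin_p K hK hKI := by
    rw [Measure.neg_apply]
    exact P.locfin_p _ hK.neg (neg_subset_Ioo hKI)
  locfin_m K hK hKI := by
    rw [Measure.neg_apply]
    exact P.locfin_m _ hK.neg (neg_subset_Ioo hKI)
  zero_p := by simpa using P.zero_p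
  zero_m := by simpa using P.zero_m
  fund_pos t ht := by
    rw [P.fund_neg (-t) ⟨neg_lt_neg ht.2, neg_nonpos.2 ht.1⟩]
    simp only [setIntegral_measure_neg, neg_Ioc, neg_zero]
    rw [integral_neg, integral_neg]
    ring
  fund_neg t ht := by
    rw [P.fund_pos (-t) ⟨neg_nonneg.2 ht.2, neg_lt.1 ht.1⟩]
    simp only [setIntegral_measure_neg, neg_Ico, neg_zero]
    rw [integral_neg, integral_neg]
    ring

theorem reflect_apply (t : ℝ) : P.reflect.R t = P.R (-t) := rfl

theorem reflect_integ : P.reflect.integ S f = P.integ (-S) fun s => f (-s) := by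
  simp only [integ, reflect, setIntegral_measure_neg]

theorem reflect_invDensity (s : ℝ) : P.reflect.invDensity s = P.invDensity (-s) := by
  simp only [invDensity, reflect, leftLim_comp_neg, rightLim_comp_neg, mul_comm]

namespace LocallyBoundedBelow

theorem reflect (hP : P.LocallyBoundedBelow) : P.reflect.LocallyBoundedBelow := by
  intro K hK hKI
  obtain ⟨ε, hε₀, hε⟩ := hP (-K) hK.neg (neg_subset_Ioo hKI)
  exact ⟨ε, hε₀, fun t ht => hε (-t) (neg_mem_neg.2 ht)⟩

theorem integrableOn_invDensity_Ioc (hP : P.LocallyBoundedBelow) (ht : t ∈ Ico (0 : ℝ) 1) :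
    IntegrableOn P.invDensity (Ioc 0 t) P.totalVariation := by
  obtain ⟨ε, hε₀, hε⟩ := hP _ isCompact_Icc (Icc_zero_subset_Ioo ht.2)
  refine ((isPrimitiveOn ht).integrableOn_inv_leftLim_mul
    (totalVariation_Ioc_ne_top ht.2) hε₀ hε).congr_fun ?_ measurableSet_Ioc
  exact fun s hs => (invDensity_of_mem_Ioc ht.2 hs).symm

theorem integrableOn_invDensity_Ico (hP : P.LocallyBoundedBelow) (ht : t ∈ Ico (0 : ℝ) 1) :
    IntegrableOn P.invDensity (Ico (-t) 0) P.totalVariation := by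
  have h := hP.reflect.integrableOn_invDensity_Ioc ht
  have hmap : P.reflect.totalVariation = P.totalVariation.map (MeasurableEquiv.neg ℝ) :=
    (Measure.map_add _ _ measurable_neg).symm
  rw [hmap, (MeasurableEquiv.neg ℝ).measurableEmbedding.integrableOn_map_iff] at h
  simpa [comp_def, reflect_invDensity] using h

theorem integrableOn_invDensity (hP : P.LocallyBoundedBelow) (hK : IsCompact K)
    (hKI : K ⊆ Ioo (-1 : ℝ) 1) : IntegrableOn P.invDensity K P.totalVariation := by
  obtain ⟨c, hc, hKc⟩ := exists_subset_Icc_neg_of_isCompact one_pos hK hKI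
  have hzero : IntegrableOn P.invDensity {0} P.totalVariation :=
    .of_measure_zero totalVariation_singleton_zero
  refine (((hP.integrableOn_invDensity_Ico hc).union hzero).union
    (hP.integrableOn_invDensity_Ioc hc)).mono_set (hKc.trans_eq ?_)
  have hc' : -c ≤ 0 := neg_nonpos.2 hc.1
  rw [union_singleton, Ico_insert_right hc', Icc_union_Ioc_eq_Icc hc' hc.1]

theorem inv_eq_add_integ (hP : P.LocallyBoundedBelow) (ht : t ∈ Ico (0 : ℝ) 1) :
    (P.R t)⁻¹ = (P.R 0)⁻¹ + P.integ (Ioc 0 t) fun s => s * P.invDensity s := by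
  obtain ⟨ε, hε₀, hε⟩ := hP _ isCompact_Icc (Icc_zero_subset_Ioo ht.2)
  have hint : IntegrableOn (fun s => s * P.invDensity s) (Ioc 0 t) P.totalVariation :=
    (hP.integrableOn_invDensity_Ioc ht).continuousOn_mul_of_subset continuousOn_id isCompact_Icc
      measurableSet_Ioc Ioc_subset_Icc_self
  rw [← sub_eq_iff_eq_add', (isPrimitiveOn ht).inv_sub_inv_eq_neg_integral ht.1 hε₀ hε,
    integ_eq_setIntegral hint, intervalIntegral.integral_of_le ht.1, ← integral_neg]
  refine setIntegral_congr_fun measurableSet_Ioc fun s hs => ?_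
  simp only [invDensity_of_mem_Ioc ht.2 hs]
  ring

theorem inv_eq_sub_integ (hP : P.LocallyBoundedBelow) (ht : t ∈ Ioc (-1 : ℝ) 0) :
    (P.R t)⁻¹ = (P.R 0)⁻¹ - P.integ (Ico t 0) fun s => s * P.invDensity s := by
  have h := hP.reflect.inv_eq_add_integ (t := -t) ⟨neg_nonneg.2 ht.2, neg_lt.1 ht.1⟩
  rw [reflect_integ, neg_Ioc, neg_neg, neg_zero] at h
  simp only [reflect_apply, reflect_invDensity, neg_neg, neg_zero, neg_mul] at h
  rw [h, integ_neg, sub_eq_add_neg]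

end LocallyBoundedBelow

end NormBV0

/-- If `inf_K |R| > 0` on every compact `K ⊆ (-1,1)`, then
`(1/R, ν_{1/R})` with `dν_{1/R}(t) = -(R(t⁻)R(t⁺))⁻¹ dν(t)` is again a normalized BV₀
pair: the density is locally `ν`-integrable (so `ν_{1/R}` is a locally finite signed
Borel measure giving no mass to `{0}`), and the fundamental relations
`1/R(t) = 1/R(0) + ∫_{(0,t]} s (R(s⁻)R(s⁺))⁻¹ dν(s)` for `t ∈ [0,1)` and
`1/R(t) = 1/R(0) - ∫_{[t,0)} s (R(s⁻)R(s⁺))⁻¹ dν(s)` for `t ∈ (-1,0]` hold. -/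
theorem bv0_inverse (P : NormBV0)
    (hR : ∀ K : Set ℝ, IsCompact K → K ⊆ Set.Ioo (-1 : ℝ) 1 →
      ∃ ε > (0 : ℝ), ∀ t ∈ K, ε ≤ |P.R t|) :
    (∀ K : Set ℝ, IsCompact K → K ⊆ Set.Ioo (-1 : ℝ) 1 →
      MeasureTheory.IntegrableOn
        (fun t => (Function.leftLim P.R t * Function.rightLim P.R t)⁻¹) K (P.νp + P.νm)) ∧
    (∀ t ∈ Set.Ico (0 : ℝ) 1,
      (P.R t)⁻¹ = (P.R 0)⁻¹ +
        P.integ (Set.Ioc 0 t)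
          (fun s => s * (Function.leftLim P.R s * Function.rightLim P.R s)⁻¹)) ∧
    (∀ t ∈ Set.Ioc (-1 : ℝ) 0,
      (P.R t)⁻¹ = (P.R 0)⁻¹ -
        P.integ (Set.Ico t 0)
          (fun s => s * (Function.leftLim P.R s * Function.rightLim P.R s)⁻¹)) := by
  have hP : P.LocallyBoundedBelow := hR
  exact ⟨fun _ hK hKI => hP.integrableOn_invDensity hK hKI, fun _ ht => hP.inv_eq_add_integ ht,
    fun _ ht => hP.inv_eq_sub_integ ht⟩
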